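/- Let x, y be probability vectors of dimension d and let u_k be the uniform probability vector of dimension k (all entries equal to 1/k). If x⊗u_k ≺ y⊗u_k, then x ≺ y. In other words, a maximally entangled catalyst (uniform Schmidt spectrum) of any dimension cannot enable a transformation between incomparable bipartite pure states. -/

import Mathlib

/-- The sum of the `k` largest entries of a vector (equivalently, for vectors with
nonnegative entries, the maximum of `∑ i ∈ s, x i` over subsets `s` of cardinality at
most `k`; this also accounts for padding with zeros). -/
noncomputable def topSum {ι : Type*} [Fintype ι] [DecidableEq ι] (x : ι → ℝ) (k : ℕ) : ℝ :=
  ((Finset.univ : Finset ι).powerset.filter (fun s => s.card ≤ k)).sup'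
    ⟨∅, by simp⟩ (fun s => ∑ i ∈ s, x i)

/-- A probability vector: nonnegative entries summing to 1. -/
def IsProbVec {ι : Type*} [Fintype ι] (x : ι → ℝ) : Prop :=
  (∀ i, 0 ≤ x i) ∧ ∑ i, x i = 1

/-- `x ≺ y` (majorization, after padding with zeros to a common dimension): every partial
sum of the `k` largest entries of `x` is at most that of `y`, with equal total sums. -/
def PMaj {ι κ : Type*} [Fintype ι] [DecidableEq ι] [Fintype κ] [DecidableEq κ]
    (x : ι → ℝ) (y : κ → ℝ) : Prop :=
  (∀ k : ℕ, topSum x k ≤ topSum y k) ∧ (∑ i, x i = ∑ j, y j)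

/-- Tensor product of two vectors: `(x ⊗ y)_{(i,j)} = x_i y_j`. -/
def pvTensor {ι κ : Type*} (x : ι → ℝ) (y : κ → ℝ) : ι × κ → ℝ :=
  fun p => x p.1 * y p.2

/-!
For `t ≥ 0` let `excess x t = ∑ i, (x i - t)⁺`. The sum of the `k` largest entries of `x` (padded
with zeros) is the minimum over `t ≥ 0` of `k * t + excess x t`, attained where `t` separates these
entries from the others. Hence (Hardy, Littlewood and Pólya) `x ≺ y` if and only if `x` and `y` have
the same sum and `excess x t ≤ excess y t` for all `t ≥ 0`. Tensoring with a constant vector only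
rescales the level and the excess, in the same way for `x` and `y`, which leaves this criterion
unchanged.
-/

section Majorization

variable {ι κ τ : Type*} [Fintype ι] [Fintype κ] [Fintype τ]

/-- The total amount by which the entries of `x` exceed the level `t`, in terms of which
majorization can be tested without sorting the entries. -/
def excess (x : ι → ℝ) (t : ℝ) : ℝ :=
  ∑ i, (x i - t)⁺

theorem sum_sub_card_mul_le_excess (x : ι → ℝ) (t : ℝ) (s : Finset ι) :
    ∑ i ∈ s, x i - s.card * t ≤ excess x t :=
  calc ∑ i ∈ s, x i - s.card * t = ∑ i ∈ s, (x i - t) := by simp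
    _ ≤ ∑ i ∈ s, (x i - t)⁺ := Finset.sum_le_sum fun _ _ => le_posPart _
    _ ≤ excess x t :=
      Finset.sum_le_sum_of_subset_of_nonneg s.subset_univ fun _ _ _ => posPart_nonneg _

theorem excess_eq_sum_sub_card_mul {x : ι → ℝ} {t : ℝ} {s : Finset ι}
    (hge : ∀ i ∈ s, t ≤ x i) (hle : ∀ i ∉ s, x i ≤ t) :
    excess x t = ∑ i ∈ s, x i - s.card * t :=
  calc excess x t = ∑ i ∈ s, (x i - t)⁺ :=
        (Finset.sum_subset s.subset_univ fun i _ hi =>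
          posPart_of_nonpos (sub_nonpos.2 (hle i hi))).symm
    _ = ∑ i ∈ s, (x i - t) :=
        Finset.sum_congr rfl fun i hi => posPart_of_nonneg (sub_nonneg.2 (hge i hi))
    _ = ∑ i ∈ s, x i - s.card * t := by simp

theorem excess_pvTensor_const (x : ι → ℝ) {c : ℝ} (hc : 0 ≤ c) (t : ℝ) :
    excess (pvTensor x fun _ : τ => c) (t * c) = Fintype.card τ * c * excess x t := by
  have entry (i : ι) : (x i * c - t * c)⁺ = (x i - t)⁺ * c := by
    simp only [posPart_def, ← sub_mul, max_mul_of_nonneg _ _ hc, zero_mul]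
  simp only [excess, pvTensor, Fintype.sum_prod_type, entry, Finset.sum_const, Finset.card_univ,
    nsmul_eq_mul, Finset.mul_sum]
  exact Finset.sum_congr rfl fun i _ => by ring

theorem sum_pvTensor (x : ι → ℝ) (c : τ → ℝ) :
    ∑ p, pvTensor x c p = (∑ i, x i) * ∑ j, c j := by
  simp only [pvTensor, Fintype.sum_prod_type, Fintype.sum_mul_sum]

variable [DecidableEq ι] [DecidableEq κ] [DecidableEq τ]

theorem sum_le_topSum (x : ι → ℝ) {k : ℕ} {s : Finset ι} (hs : s.card ≤ k) :
    ∑ i ∈ s, x i ≤ topSum x k :=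
  Finset.le_sup' (fun s => ∑ i ∈ s, x i) (by simpa using hs)

theorem exists_sum_eq_topSum (x : ι → ℝ) (k : ℕ) :
    ∃ s : Finset ι, s.card ≤ k ∧ ∑ i ∈ s, x i = topSum x k := by
  obtain ⟨s, hs, hsum⟩ := Finset.exists_mem_eq_sup'
    (s := (Finset.univ : Finset ι).powerset.filter fun s => s.card ≤ k)
    ⟨∅, by simp⟩ fun s => ∑ i ∈ s, x i
  exact ⟨s, (Finset.mem_filter.1 hs).2, hsum.symm⟩

theorem topSum_le_mul_add_excess (x : ι → ℝ) (k : ℕ) {t : ℝ} (ht : 0 ≤ t) :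
    topSum x k ≤ k * t + excess x t := by
  obtain ⟨s, hs, hsum⟩ := exists_sum_eq_topSum x k
  have hcard : s.card * t ≤ k * t := by gcongr
  linarith [sum_sub_card_mul_le_excess x t s]

section Maximizer

variable {x : ι → ℝ} {k : ℕ} {s : Finset ι}

theorem nonneg_of_sum_eq_topSum (hs : s.card ≤ k) (hsum : ∑ i ∈ s, x i = topSum x k)
    {i : ι} (hi : i ∈ s) : 0 ≤ x i := by
  have herase := sum_le_topSum x ((Finset.card_erase_le (a := i)).trans hs)
  linarith [Finset.add_sum_erase s x hi]

theorem nonpos_of_sum_eq_topSum (hs : s.card < k) (hsum : ∑ i ∈ s, x i = topSum x k)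
    {j : ι} (hj : j ∉ s) : x j ≤ 0 := by
  have hinsert := sum_le_topSum x ((Finset.card_insert_le j s).trans hs)
  linarith [Finset.sum_insert (f := x) hj]

theorem le_of_sum_eq_topSum (hs : s.card ≤ k) (hsum : ∑ i ∈ s, x i = topSum x k)
    {i j : ι} (hi : i ∈ s) (hj : j ∉ s) : x j ≤ x i := by
  have hj' : j ∉ s.erase i := fun h => hj (Finset.mem_of_mem_erase h)
  have hcard : (insert j (s.erase i)).card = s.card := by
    rw [Finset.card_insert_of_notMem hj', Finset.card_erase_add_one hi]
  have hswap := sum_le_topSum x (hcard.trans_le hs)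
  linarith [Finset.add_sum_erase s x hi, Finset.sum_insert (f := x) hj']

theorem exists_threshold_of_sum_eq_topSum (hs : s.card ≤ k)
    (hsum : ∑ i ∈ s, x i = topSum x k) :
    ∃ t : ℝ, 0 ≤ t ∧ s.card * t = k * t ∧ (∀ i ∈ s, t ≤ x i) ∧ ∀ j ∉ s, x j ≤ t := by
  refine ⟨(sᶜ.sup fun j => (x j).toNNReal : NNReal), NNReal.coe_nonneg _, ?_, fun i hi => ?_,
    fun j hj => ?_⟩
  · rcases hs.eq_or_lt with heq | hlt
    · rw [heq]
    · have hzero : (sᶜ.sup fun j => (x j).toNNReal) = 0 :=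
        (Finset.sup_eq_bot_iff _ _).2 fun j hj => Real.toNNReal_of_nonpos
          (nonpos_of_sum_eq_topSum hlt hsum (Finset.mem_compl.1 hj))
      simp [hzero]
  · rw [← Real.le_toNNReal_iff_coe_le (nonneg_of_sum_eq_topSum hs hsum hi)]
    exact Finset.sup_le fun j hj => Real.toNNReal_mono
      (le_of_sum_eq_topSum hs hsum hi (Finset.mem_compl.1 hj))
  · exact Real.toNNReal_le_iff_le_coe.1
      (Finset.le_sup (f := fun j => (x j).toNNReal) (Finset.mem_compl.2 hj))

end Maximizer

theorem exists_topSum_eq_mul_add_excess (x : ι → ℝ) (k : ℕ) :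
    ∃ t : ℝ, 0 ≤ t ∧ topSum x k = k * t + excess x t := by
  obtain ⟨s, hs, hsum⟩ := exists_sum_eq_topSum x k
  obtain ⟨t, ht, hcard, hge, hle⟩ := exists_threshold_of_sum_eq_topSum hs hsum
  exact ⟨t, ht, by rw [excess_eq_sum_sub_card_mul hge hle, hcard, hsum]; ring⟩

theorem forall_topSum_le_iff_forall_excess_le {x : ι → ℝ} {y : κ → ℝ} :
    (∀ k, topSum x k ≤ topSum y k) ↔ ∀ t, 0 ≤ t → excess x t ≤ excess y t := by
  constructor
  · intro h t ht
    let s : Finset ι := {i | t ≤ x i}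
    have hexcess : excess x t = ∑ i ∈ s, x i - s.card * t :=
      excess_eq_sum_sub_card_mul (by simp [s]) (by simpa [s] using fun _ => le_of_lt)
    linarith [sum_le_topSum x le_rfl (s := s), h s.card, topSum_le_mul_add_excess y s.card ht]
  · intro h k
    obtain ⟨t, ht, hy⟩ := exists_topSum_eq_mul_add_excess y k
    linarith [topSum_le_mul_add_excess x k ht, h t ht]

theorem pMaj_iff_forall_excess_le {x : ι → ℝ} {y : κ → ℝ} :
    PMaj x y ↔ (∀ t, 0 ≤ t → excess x t ≤ excess y t) ∧ ∑ i, x i = ∑ j, y j :=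
  and_congr_left' forall_topSum_le_iff_forall_excess_le

theorem uniform_catalyst_useless_general [Nonempty τ] {c : ℝ} (hc : 0 < c) (x : ι → ℝ)
    (y : κ → ℝ) :
    PMaj (pvTensor x fun _ : τ => c) (pvTensor y fun _ : τ => c) ↔ PMaj x y := by
  have hmass : 0 < Fintype.card τ * c := by positivity
  have hexcess (t : ℝ) :
      excess (pvTensor x fun _ : τ => c) (t * c) ≤ excess (pvTensor y fun _ : τ => c) (t * c) ↔
        excess x t ≤ excess y t := by
    rw [excess_pvTensor_const x hc.le, excess_pvTensor_const y hc.le, mul_le_mul_iff_right₀ hmass]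
  have hsum : ∑ p, pvTensor x (fun _ : τ => c) p = ∑ p, pvTensor y (fun _ : τ => c) p ↔
      ∑ i, x i = ∑ j, y j := by
    have hne : ∑ _ : τ, c ≠ 0 := by simpa using hmass.ne'
    rw [sum_pvTensor, sum_pvTensor, mul_left_inj' hne]
  simp only [pMaj_iff_forall_excess_le, hsum, ← hexcess]
  refine and_congr_left' ⟨fun h t ht => h (t * c) (by positivity), fun h t ht => ?_⟩
  simpa [hc.ne'] using h (t / c) (by positivity)

end Majorization

/-- A maximally entangled catalyst (uniform Schmidt spectrum) of any dimension is useless: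
if `x ⊗ u_k ≺ y ⊗ u_k` for the uniform probability vector `u_k`, then already `x ≺ y`. -/
theorem uniform_catalyst_useless {d k : ℕ} (hk : 0 < k) (x y : Fin d → ℝ)
    (hx : IsProbVec x) (hy : IsProbVec y)
    (h : PMaj (pvTensor x (fun _ : Fin k => 1 / (k : ℝ)))
        (pvTensor y (fun _ : Fin k => 1 / (k : ℝ)))) :
    PMaj x y := by
  have : Nonempty (Fin k) := Fin.pos_iff_nonempty.1 hk
  exact (uniform_catalyst_useless_general (by positivity) x y).1 h
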